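/- arXiv:2206.03533 — 2 statements merged into one kernel-verified Lean document; each statement's English description precedes it below -/
import Mathlib

section
/- Let R be a coherent ring and 0 → M'' → M' → M → 0 an exact sequence of R-modules with M' w-FP-projective and w-fpd_R(M) > 0. Then w-fpd_R(M) = w-fpd_R(M'') + 1. -/
open CategoryTheory

universe u

noncomputable section

variable (R : Type u) [CommRing R]

/-- The Ext group `Ext^n_R(M, N)` as an `R`-module (via `ModuleCat`). -/
def extMod (M N : Type u) [AddCommGroup M] [Module R M]
    [AddCommGroup N] [Module R N] (n : ℕ) : ModuleCat R :=
  ((Ext R (ModuleCat R) n).obj (Opposite.op (ModuleCat.of R M))).obj (ModuleCat.of R N)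

/-- `J` is a Glaz–Vasconcelos ideal: finitely generated and the natural map
`R → Hom_R(J, R)` is bijective. -/
def IsGVIdeal (J : Ideal R) : Prop :=
  J.FG ∧ Function.Bijective (fun r : R => (r • J.subtype : J →ₗ[R] R))

/-- A module is GV-torsion if every element is annihilated by some GV-ideal. -/
def IsGVTorsion (M : Type u) [AddCommGroup M] [Module R M] : Prop :=
  ∀ x : M, ∃ J : Ideal R, IsGVIdeal R J ∧ ∀ j ∈ J, j • x = 0

/-- An ideal `I` is a `w`-ideal if it is `w`-closed: whenever `J x ⊆ I` for some
GV-ideal `J`, one has `x ∈ I`. -/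
def IsWIdeal (I : Ideal R) : Prop :=
  ∀ (x : R) (J : Ideal R), IsGVIdeal R J → (∀ j ∈ J, j * x ∈ I) → x ∈ I

/-- `R` is a DW-ring if every maximal ideal is a `w`-ideal. -/
def IsDWRing : Prop :=
  ∀ m : Ideal R, m.IsMaximal → IsWIdeal R m

/-- `A` is absolutely `w`-pure if `Ext^1_R(N, A)` is GV-torsion for every
finitely presented module `N`. -/
def IsAbsolutelyWPure (A : Type u) [AddCommGroup A] [Module R A] : Prop :=
  ∀ (N : Type u) [AddCommGroup N] [Module R N], Module.FinitePresentation R N →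
    IsGVTorsion R (extMod R N A 1)

/-- `M` is `w`-FP-projective if `Ext^1_R(M, A) = 0` for every absolutely
`w`-pure module `A`. -/
def IsWFPProjective (M : Type u) [AddCommGroup M] [Module R M] : Prop :=
  ∀ (A : Type u) [AddCommGroup A] [Module R A], IsAbsolutelyWPure R A →
    Subsingleton (extMod R M A 1)

end
def IsCoherentRing (R : Type u) [CommRing R] : Prop :=
  ∀ I : Ideal R, I.FG → Module.FinitePresentation R I

/-- The `w`-FP-projective dimension of `M`: the least `n` such that
`Ext^{n+1}_R(M, A) = 0` for every absolutely `w`-pure module `A` (`⊤ = ∞` if none). -/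
noncomputable def wFPProjDim (R : Type u) [CommRing R]
    (M : Type u) [AddCommGroup M] [Module R M] : ℕ∞ :=
  sInf {n : ℕ∞ | ∃ k : ℕ, n = k ∧
    ∀ (A : Type u) [AddCommGroup A] [Module R A], IsAbsolutelyWPure R A →
      Subsingleton (extMod R M A (k + 1))}

/-!
Over a coherent ring, kernels of surjections from finite free modules onto finitely presented
modules are again finitely presented. Hence, if an absolutely `w`-pure module `A` embeds in an
injective module `E`, then `E / A` is absolutely `w`-pure as well, because `Ext¹(N, E / A)` embeds
in `Ext²(N, A)`, which is a quotient of `Ext¹` of such a kernel with values in `A`. Since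
`Extⁿ⁺¹(M, A)` is a quotient of `Extⁿ(M, E / A)`, vanishing of `Extⁿ(M, -)` on absolutely `w`-pure
modules persists in all higher degrees. In particular the connecting maps
`Extⁿ⁺¹(M'', A) → Extⁿ⁺²(M, A)` are bijective when `M'` is `w`-FP-projective, so
`w-fpd(M) ≤ k + 1` if and only if `w-fpd(M'') ≤ k`.
-/

universe w

noncomputable section

section ExtComparison

variable {R : Type*} [Ring R] {C : Type*} [Category* C] [Abelian C] [Linear R C]
  {X : C} (P : ProjectiveResolution X) (Y : C) (n : ℕ)

variable (R) in
/-- The short complex `Hom(Pₙ, Y) → Hom(Pₙ₊₁, Y) → Hom(Pₙ₊₂, Y)` of a projective resolution `P`,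
used to compute both versions of `Extⁿ⁺¹(X, Y)` in Mathlib. -/
abbrev homShortComplex : ShortComplex (ModuleCat R) :=
  (P.complex.linearYonedaObj R Y).sc' n (n + 1) (n + 2)

variable [HasExt.{w} C]

variable {Y n} in
lemma smul_extMk (r : R) {f : P.complex.X n ⟶ Y} {m : ℕ} (hm : n + 1 = m)
    (hf : P.complex.d m n ≫ f = 0) :
    r • P.extMk f m hm hf = P.extMk (r • f) m hm (by simp [hf]) := by
  simp [Abelian.Ext.smul_eq_comp_mk₀, P.extMk_comp_mk₀]

variable (R) in
/-- The linear map sending a cocycle `Pₙ₊₁ ⟶ Y` of a projective resolution `P` of `X` to its class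
in `Abelian.Ext X Y (n + 1)`. -/
def cocycleToExt :
    LinearMap.ker (homShortComplex R P Y n).g.hom →ₗ[R] Abelian.Ext.{w} X Y (n + 1) where
  toFun f := P.extMk f.1 (n + 2) rfl f.2
  map_add' _ _ := (P.add_extMk _ _ _ _ _ _).symm
  map_smul' _ _ := (smul_extMk P _ _ _).symm

lemma cocycleToExt_surjective : Function.Surjective (cocycleToExt R P Y n) := fun x ↦
  let ⟨f, hf, h⟩ := P.extMk_surjective x (n + 2) rfl
  ⟨⟨f, hf⟩, h⟩

lemma ker_cocycleToExt :
    LinearMap.ker (cocycleToExt R P Y n) =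
      LinearMap.range (homShortComplex R P Y n).moduleCatToCycles := by
  ext f
  exact (P.extMk_eq_zero_iff f.1 (n + 2) rfl f.2 n rfl).trans
    ⟨fun ⟨g, hg⟩ ↦ ⟨g, Subtype.ext hg⟩, fun ⟨g, hg⟩ ↦ ⟨g, congrArg Subtype.val hg⟩⟩

variable (R) in
/-- The comparison, in positive degrees, of the `Ext` modules defined as left derived functors of
`Hom` with those defined through the derived category. -/
def extLinearEquiv [EnoughProjectives C] (X Y : C) (n : ℕ) :
    ((Ext R C (n + 1)).obj (Opposite.op X)).obj Y ≃ₗ[R] Abelian.Ext.{w} X Y (n + 1) :=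
  let P := projectiveResolution X
  let K := P.complex.linearYonedaObj R Y
  (P.isoExt (n + 1) Y ≪≫
    ShortComplex.homologyMapIso (K.isoSc' n (n + 1) (n + 2) (by simp) (by simp)) ≪≫
    (homShortComplex R P Y n).moduleCatHomologyIso).toLinearEquiv ≪≫ₗ
  Submodule.quotEquivOfEq _ _ (ker_cocycleToExt P Y n).symm ≪≫ₗ
  (cocycleToExt R P Y n).quotKerEquivOfSurjective (cocycleToExt_surjective P Y n)

end ExtComparison

section DimensionShifting

variable {C : Type*} [Category* C] [Abelian C] [HasExt.{w} C] {S : ShortComplex C}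

lemma precomp_extClass_injective (hS : S.ShortExact) (X : C) (n : ℕ)
    [Subsingleton (Abelian.Ext.{w} S.X₂ X n)] :
    Function.Injective (hS.extClass.precomp X (add_comm 1 n)) := by
  refine (injective_iff_map_eq_zero _).2 fun x hx ↦ ?_
  obtain ⟨y, rfl⟩ := Abelian.Ext.contravariant_sequence_exact₁ hS X x (add_comm 1 n) hx
  simp [Subsingleton.elim y 0]

lemma precomp_extClass_surjective (hS : S.ShortExact) (X : C) (n : ℕ)
    [Subsingleton (Abelian.Ext.{w} S.X₂ X (n + 1))] :
    Function.Surjective (hS.extClass.precomp X (add_comm 1 n)) := fun x ↦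
  Abelian.Ext.contravariant_sequence_exact₃ hS X x (Subsingleton.elim _ _) (add_comm 1 n)

lemma postcomp_extClass_injective (hS : S.ShortExact) (X : C) (n : ℕ)
    [Subsingleton (Abelian.Ext.{w} X S.X₂ n)] :
    Function.Injective (hS.extClass.postcomp X (rfl : n + 1 = n + 1)) := by
  refine (injective_iff_map_eq_zero _).2 fun x hx ↦ ?_
  obtain ⟨y, rfl⟩ := Abelian.Ext.covariant_sequence_exact₃ X hS x rfl hx
  simp [Subsingleton.elim y 0]

lemma subsingleton_ext_succ_iff (hS : S.ShortExact) (X : C) (n : ℕ)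
    [Subsingleton (Abelian.Ext.{w} S.X₂ X n)] [Subsingleton (Abelian.Ext.{w} S.X₂ X (n + 1))] :
    Subsingleton (Abelian.Ext.{w} S.X₃ X (n + 1)) ↔ Subsingleton (Abelian.Ext.{w} S.X₁ X n) :=
  (Equiv.ofBijective _ ⟨precomp_extClass_injective hS X n,
    precomp_extClass_surjective hS X n⟩).subsingleton_congr.symm

end DimensionShifting

section CoherentRing

variable {R : Type u} [CommRing R]

lemma IsCoherentRing.finitePresentation_of_injective (hR : IsCoherentRing R) {n : ℕ}
    {K : Type*} [AddCommGroup K] [Module R K] [Module.Finite R K]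
    (i : K →ₗ[R] (Fin n → R)) (hi : Function.Injective i) : Module.FinitePresentation R K := by
  induction n generalizing K with
  | zero =>
    have : Subsingleton K := hi.subsingleton
    infer_instance
  | succ n ih =>
    let head : K →ₗ[R] R := LinearMap.proj 0 ∘ₗ i
    let tail : K →ₗ[R] (Fin n → R) := LinearMap.funLeft R R Fin.succ ∘ₗ i
    have : Module.FinitePresentation R head.range :=
      hR _ (Module.Finite.iff_fg.1 inferInstance)
    have : Module.Finite R head.rangeRestrict.ker := Module.Finite.iff_fg.2
      (Module.FinitePresentation.fg_ker _ head.surjective_rangeRestrict)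
    have tail_injective : Function.Injective (tail ∘ₗ head.rangeRestrict.ker.subtype) := by
      refine (injective_iff_map_eq_zero _).2 fun ⟨x, hx⟩ hx_tail ↦ Subtype.ext (hi ?_)
      have hx_head : i x 0 = 0 := congrArg Subtype.val hx
      exact (funext (Fin.cases hx_head (congrFun hx_tail))).trans (map_zero i).symm
    have : Module.FinitePresentation R head.rangeRestrict.ker := ih _ tail_injective
    exact Module.finitePresentation_of_ker _ head.surjective_rangeRestrict

lemma IsCoherentRing.finitePresentation_ker (hR : IsCoherentRing R) {n : ℕ}
    {N : Type*} [AddCommGroup N] [Module R N] [Module.FinitePresentation R N]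
    {f : (Fin n → R) →ₗ[R] N} (hf : Function.Surjective f) :
    Module.FinitePresentation R f.ker :=
  have : Module.Finite R f.ker :=
    Module.Finite.iff_fg.2 (Module.FinitePresentation.fg_ker f hf)
  hR.finitePresentation_of_injective f.ker.subtype f.ker.subtype_injective

end CoherentRing

section AbsolutelyWPure

variable {R : Type u} [CommRing R]

section GVTorsion

variable {M N : Type u} [AddCommGroup M] [Module R M] [AddCommGroup N] [Module R N]

lemma IsGVTorsion.of_surjective (hM : IsGVTorsion R M) (f : M →ₗ[R] N)
    (hf : Function.Surjective f) : IsGVTorsion R N := fun y ↦ by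
  obtain ⟨x, rfl⟩ := hf y
  obtain ⟨J, hJ, hJx⟩ := hM x
  exact ⟨J, hJ, fun j hj ↦ by rw [← map_smul, hJx j hj, map_zero]⟩

lemma IsGVTorsion.of_injective (hN : IsGVTorsion R N) (f : M →ₗ[R] N)
    (hf : Function.Injective f) : IsGVTorsion R M := fun x ↦ by
  obtain ⟨J, hJ, hJx⟩ := hN (f x)
  exact ⟨J, hJ, fun j hj ↦ hf (by rw [map_smul, hJx j hj, map_zero])⟩

lemma isGVTorsion_congr (e : M ≃ₗ[R] N) : IsGVTorsion R M ↔ IsGVTorsion R N :=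
  ⟨fun h ↦ h.of_surjective e.toLinearMap e.surjective,
    fun h ↦ h.of_injective e.toLinearMap e.injective⟩

end GVTorsion

lemma isAbsolutelyWPure_iff {A : ModuleCat.{u} R} :
    IsAbsolutelyWPure R A ↔ ∀ N : ModuleCat.{u} R, Module.FinitePresentation R N →
      IsGVTorsion R (Abelian.Ext.{u} N A 1) :=
  ⟨fun h N hN ↦ (isGVTorsion_congr (extLinearEquiv R N A 0)).1 (h N hN),
    fun h N _ _ hN ↦ (isGVTorsion_congr (extLinearEquiv R (ModuleCat.of R N) A 0)).2 (h _ hN)⟩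

lemma IsCoherentRing.isGVTorsion_ext_two (hR : IsCoherentRing R) {A N : ModuleCat.{u} R}
    (hA : IsAbsolutelyWPure R A) [Module.FinitePresentation R N] :
    IsGVTorsion R (Abelian.Ext.{u} N A 2) := by
  obtain ⟨n, _, f, _, hf, -⟩ := Module.FinitePresentation.exists_fin' R N
  have hS := LinearMap.shortExact_shortComplexKer hf
  have : Projective f.shortComplexKer.X₂ :=
    (IsProjective.iff_projective (R := R) (Fin n → R)).1 inferInstance
  have h_ker : IsGVTorsion R (Abelian.Ext.{u} f.shortComplexKer.X₁ A 1) :=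
    isAbsolutelyWPure_iff.1 hA _ (hR.finitePresentation_ker hf)
  exact h_ker.of_surjective (hS.extClass.precompOfLinear R A (add_comm 1 1))
    (precomp_extClass_surjective_of_projective_X₂ A hS 1)

lemma IsAbsolutelyWPure.of_shortExact (hR : IsCoherentRing R) {S : ShortComplex (ModuleCat.{u} R)}
    (hS : S.ShortExact) [Injective S.X₂] (hA : IsAbsolutelyWPure R S.X₁) :
    IsAbsolutelyWPure R S.X₃ :=
  isAbsolutelyWPure_iff.2 fun N _ ↦
    have := Abelian.Ext.subsingleton_of_injective.{u} N S.X₂ 0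
    (hR.isGVTorsion_ext_two hA).of_injective
      (hS.extClass.postcompOfLinear R N (rfl : 1 + 1 = 2)) (postcomp_extClass_injective hS N 1)

end AbsolutelyWPure

section WFPProjDim

variable {R : Type u} [CommRing R]

/-- `Extⁿ(M, A) = 0` for every absolutely `w`-pure module `A`; this is the condition in terms of
which `w`-FP-projectivity and the `w`-FP-projective dimension are expressed. It uses
`Abelian.Ext`, for which the long exact sequences are available. -/
def WFPExtVanishes (M : ModuleCat.{u} R) (n : ℕ) : Prop :=
  ∀ A : ModuleCat.{u} R, IsAbsolutelyWPure R A → Subsingleton (Abelian.Ext.{u} M A n)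

lemma wFPExtVanishes_succ_iff {M : ModuleCat.{u} R} {n : ℕ} :
    WFPExtVanishes M (n + 1) ↔ ∀ (A : Type u) [AddCommGroup A] [Module R A],
      IsAbsolutelyWPure R A → Subsingleton (extMod R M A (n + 1)) :=
  ⟨fun h A _ _ hA ↦
      (extLinearEquiv R M (ModuleCat.of R A) n).toEquiv.subsingleton_congr.2 (h (.of R A) hA),
    fun h A hA ↦ (extLinearEquiv R M A n).toEquiv.subsingleton_congr.1 (h A hA)⟩

lemma isWFPProjective_iff {M : ModuleCat.{u} R} : IsWFPProjective R M ↔ WFPExtVanishes M 1 :=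
  wFPExtVanishes_succ_iff.symm

lemma WFPExtVanishes.succ (hR : IsCoherentRing R) {M : ModuleCat.{u} R} {n : ℕ}
    (hM : WFPExtVanishes M n) : WFPExtVanishes M (n + 1) := fun A hA ↦ by
  obtain ⟨I⟩ := EnoughInjectives.presentation A
  have hS := I.shortExact_shortComplex
  have : Injective I.shortComplex.X₂ := I.injective
  have := hM _ (hA.of_shortExact hR hS)
  exact (postcomp_extClass_surjective_of_projective_X₂ hS M n).subsingleton

lemma WFPExtVanishes.mono (hR : IsCoherentRing R) {M : ModuleCat.{u} R} {m n : ℕ}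
    (hM : WFPExtVanishes M m) (hmn : m ≤ n) : WFPExtVanishes M n :=
  Nat.le_induction hM (fun _ _ ↦ .succ hR) n hmn

lemma WFPExtVanishes.shortExact_iff {S : ShortComplex (ModuleCat.{u} R)} (hS : S.ShortExact)
    {n : ℕ} (h₀ : WFPExtVanishes S.X₂ n) (h₁ : WFPExtVanishes S.X₂ (n + 1)) :
    WFPExtVanishes S.X₃ (n + 1) ↔ WFPExtVanishes S.X₁ n :=
  forall₂_congr fun A hA ↦
    have := h₀ A hA
    have := h₁ A hA
    subsingleton_ext_succ_iff hS A n

lemma wFPProjDim_le_iff (hR : IsCoherentRing R) {M : ModuleCat.{u} R} {k : ℕ} :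
    wFPProjDim R M ≤ k ↔ WFPExtVanishes M (k + 1) := by
  refine ⟨fun h ↦ ?_, fun h ↦ sInf_le ⟨k, rfl, wFPExtVanishes_succ_iff.1 h⟩⟩
  obtain ⟨_, ⟨m, rfl, hm⟩, hmk⟩ :=
    sInf_lt_iff.1 (h.trans_lt (Nat.cast_lt.2 k.lt_succ_self : (k : ℕ∞) < (k + 1 : ℕ)))
  exact (wFPExtVanishes_succ_iff.2 hm).mono hR (Nat.cast_lt.1 hmk)

lemma IsWFPProjective.wFPProjDim_le_succ_iff (hR : IsCoherentRing R)
    {S : ShortComplex (ModuleCat.{u} R)} (hS : S.ShortExact) (hX₂ : IsWFPProjective R S.X₂)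
    (k : ℕ) : wFPProjDim R S.X₃ ≤ (k + 1 : ℕ) ↔ wFPProjDim R S.X₁ ≤ k := by
  have vanishes (n : ℕ) : WFPExtVanishes S.X₂ (n + 1) :=
    (isWFPProjective_iff.1 hX₂).mono hR (Nat.le_add_left 1 n)
  rw [wFPProjDim_le_iff hR, wFPProjDim_le_iff hR,
    WFPExtVanishes.shortExact_iff hS (vanishes k) (vanishes (k + 1))]

end WFPProjDim

end

/-- Over a coherent ring, given `0 → M'' → M' → M → 0` exact with `M'`
`w`-FP-projective and `w-fpd(M) > 0`, one has `w-fpd(M) = w-fpd(M'') + 1`. -/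
theorem wFPProjDim_eq_succ (R : Type u) [CommRing R] (hR : IsCoherentRing R)
    (M'' M' M : Type u) [AddCommGroup M''] [Module R M''] [AddCommGroup M'] [Module R M']
    [AddCommGroup M] [Module R M]
    (f : M'' →ₗ[R] M') (g : M' →ₗ[R] M) (hf : Function.Injective f)
    (hg : Function.Surjective g) (hfg : Function.Exact f g)
    (hM' : IsWFPProjective R M') (hM : 0 < wFPProjDim R M) :
    wFPProjDim R M = wFPProjDim R M'' + 1 := by
  let S := ModuleCat.shortComplexOfCompEqZero f g hfg.linearMap_comp_eq_zero
  have hS : S.ShortExact := ModuleCat.shortComplex_shortExact S hfg hf hg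
  have shift (k : ℕ) : wFPProjDim R M ≤ (k + 1 : ℕ) ↔ wFPProjDim R M'' ≤ k :=
    IsWFPProjective.wFPProjDim_le_succ_iff hR hS hM' k
  refine eq_of_forall_ge_iff fun c ↦ ?_
  induction c using ENat.recTopCoe with
  | top => simp
  | coe c =>
    cases c with
    | zero => simp [hM.ne']
    | succ k => rw [shift, Nat.cast_succ, ENat.add_le_add_iff_right ENat.one_ne_top]
end

section
/- For a commutative ring R, the following are equivalent: (1) every R-module is w-FP-projective; (2) every absolutely w-pure R-module is injective; (3) R is a Noetherian DW-ring. -/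
open CategoryTheory

universe u

/-!
If `0 → K → P → M → 0` is a projective presentation, then `Ext^1_R(M, A)` is the cokernel of the
restriction map `Hom(P, A) → Hom(K, A)`, so the annihilator of `Ext^1_R(M, A)` is the ideal of
those `r` such that `r • f` extends to `P` for every `f : K → A`.

By Nakayama's lemma an idempotent finitely generated ideal `J` is killed by some `r ∈ 1 + J`; if `J`
is a `GV`-ideal then `r = 0`, because `R → Hom(J, R)` is injective, and so `J = R`.

Suppose every absolutely `w`-pure module is injective. If `J` is a `GV`-ideal, then `J / J²`, being
killed by `J`, is absolutely `w`-pure and hence injective; but a map from `J` to an injective module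
killed by `J` vanishes, so `J = J²` and hence `J = R`. Therefore `R` is a DW-ring. Moreover
FP-injective modules are absolutely `w`-pure and are stable under direct sums, so countable direct
sums of injective modules are injective and `R` is Noetherian by the Bass–Papp argument.

Conversely, over a DW-ring `GV`-torsion modules vanish, so absolutely `w`-pure modules are
FP-injective, and over a Noetherian ring FP-injective modules satisfy Baer's criterion.
-/

section ExtensionIdeal

variable {R : Type*} [CommRing R] {P : Type*} [AddCommGroup P] [Module R P]

/-- The extension ideal of a submodule `K ≤ P` with respect to `A`: the annihilator of the cokernel
of the restriction map `Hom(P, A) → Hom(K, A)`. It controls `Ext^1_R(P ⧸ K, A)` when `P` is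
projective, and contains `1` exactly when every linear map `K → A` extends to `P`. -/
def extensionIdeal (K : Submodule R P) (A : Type*) [AddCommGroup A] [Module R A] : Ideal R :=
  (LinearMap.range (LinearMap.lcomp R A K.subtype)).colon Set.univ

variable {A : Type*} [AddCommGroup A] [Module R A]

lemma mem_extensionIdeal {K : Submodule R P} {r : R} :
    r ∈ extensionIdeal K A ↔ ∀ f : K →ₗ[R] A, ∃ g : P →ₗ[R] A, g ∘ₗ K.subtype = r • f := by
  simp only [extensionIdeal, Submodule.mem_colon, Set.mem_univ, true_imp_iff, LinearMap.mem_range]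
  rfl

lemma extensionIdeal_eq_top_iff {K : Submodule R P} :
    extensionIdeal K A = ⊤ ↔ ∀ f : K →ₗ[R] A, ∃ g : P →ₗ[R] A, g ∘ₗ K.subtype = f := by
  rw [Ideal.eq_top_iff_one, mem_extensionIdeal]
  simp only [one_smul]

lemma annihilator_le_extensionIdeal (K : Submodule R P) :
    Module.annihilator R A ≤ extensionIdeal K A := by
  refine fun r hr ↦ mem_extensionIdeal.2 fun f ↦ ⟨0, ?_⟩
  ext x
  exact (Module.mem_annihilator.1 hr (f x)).symm

lemma extensionIdeal_ker_le {P' M : Type*} [AddCommGroup P'] [Module R P'] [AddCommGroup M]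
    [Module R M] {p : P →ₗ[R] M} {p' : P' →ₗ[R] M} {u : P' →ₗ[R] P} {v : P →ₗ[R] P'}
    (hu : p ∘ₗ u = p') (hv : p' ∘ₗ v = p) :
    extensionIdeal (LinearMap.ker p') A ≤ extensionIdeal (LinearMap.ker p) A := by
  intro r hr
  rw [mem_extensionIdeal] at hr ⊢
  intro f
  have hpu (x : P') : p (u x) = p' x := LinearMap.congr_fun hu x
  have hpv (x : P) : p' (v x) = p x := LinearMap.congr_fun hv x
  let uKer : LinearMap.ker p' →ₗ[R] LinearMap.ker p :=
    u.restrict fun x hx ↦ (hpu x).trans hx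
  -- `g ∘ v` need not restrict to `r • f`; the error is absorbed by `f` composed with `id - u ∘ v`.
  let defect : P →ₗ[R] LinearMap.ker p :=
    (LinearMap.id - u ∘ₗ v).codRestrict _ fun x ↦ by simp [hpu, hpv]
  obtain ⟨g, hg⟩ := hr (f ∘ₗ uKer)
  refine ⟨g ∘ₗ v + r • f ∘ₗ defect, LinearMap.ext fun x ↦ ?_⟩
  have hvx : v x ∈ LinearMap.ker p' := (hpv x).trans x.2
  have hgv : g (v x) = r • f (uKer ⟨v x, hvx⟩) := LinearMap.congr_fun hg ⟨v x, hvx⟩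
  have hdecomp : uKer ⟨v x, hvx⟩ + defect x = x := Subtype.ext (add_sub_cancel (u (v x)) (x : P))
  calc g (v x) + r • f (defect x)
      = r • f (uKer ⟨v x, hvx⟩ + defect x) := by rw [hgv, map_add, smul_add]
    _ = r • f x := by rw [hdecomp]

lemma extensionIdeal_ker_eq {P' M : Type*} [AddCommGroup P'] [Module R P'] [AddCommGroup M]
    [Module R M] [Module.Projective R P] [Module.Projective R P'] {p : P →ₗ[R] M}
    {p' : P' →ₗ[R] M} (hp : Function.Surjective p) (hp' : Function.Surjective p') :
    extensionIdeal (LinearMap.ker p) A = extensionIdeal (LinearMap.ker p') A := by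
  obtain ⟨u, hu⟩ := Module.projective_lifting_property p p' hp
  obtain ⟨v, hv⟩ := Module.projective_lifting_property p' p hp'
  exact (extensionIdeal_ker_le hv hu).antisymm (extensionIdeal_ker_le hu hv)

lemma mem_extensionIdeal_range {N Q : Type*} [AddCommGroup N] [Module R N] [AddCommGroup Q]
    [Module R Q] {e : N →ₗ[R] Q} {d : Q →ₗ[R] P} (hed : Function.Exact e d) {r : R} :
    r ∈ extensionIdeal (LinearMap.range d) A ↔
      ∀ y : Q →ₗ[R] A, y ∘ₗ e = 0 → ∃ z : P →ₗ[R] A, z ∘ₗ d = r • y := by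
  have hexact : Function.Exact e d.rangeRestrict := fun x ↦ by
    rw [← hed x, ← LinearMap.mem_ker, LinearMap.ker_rangeRestrict, LinearMap.mem_ker]
  rw [mem_extensionIdeal]
  constructor
  · intro h y hy
    obtain ⟨f, rfl⟩ :=
      (LinearMap.exact_lcomp_of_exact_of_surjective A hexact d.surjective_rangeRestrict y).1 hy
    obtain ⟨z, hz⟩ := h f
    exact ⟨z, congrArg (· ∘ₗ d.rangeRestrict) hz⟩
  · intro h f
    have hfe : (f ∘ₗ d.rangeRestrict) ∘ₗ e = 0 := by
      rw [LinearMap.comp_assoc, hexact.linearMap_comp_eq_zero, LinearMap.comp_zero]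
    obtain ⟨z, hz⟩ := h (f ∘ₗ d.rangeRestrict) hfe
    refine ⟨z, ?_⟩
    rwa [← LinearMap.cancel_right d.surjective_rangeRestrict]

lemma iInf_extensionIdeal_le_dfinsupp {ι : Type*} {E : ι → Type*} [∀ i, AddCommGroup (E i)]
    [∀ i, Module R (E i)] {K : Submodule R P} (hK : K.FG) :
    ⨅ i, extensionIdeal K (E i) ≤ extensionIdeal K (Π₀ i, E i) := by
  classical
  intro r hr
  rw [mem_extensionIdeal]
  intro f
  have hcomponent (i : ι) :
      ∃ g : P →ₗ[R] E i, g ∘ₗ K.subtype = r • (DFinsupp.lapply i ∘ₗ f) :=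
    mem_extensionIdeal.1 ((Ideal.mem_iInf.1 hr) i) _
  choose g hg using hcomponent
  obtain ⟨S, hS⟩ := (Submodule.fg_top K).2 hK
  let s : Finset ι := S.biUnion fun x ↦ (f x).support
  refine ⟨∑ i ∈ s, DFinsupp.lsingle i ∘ₗ g i, LinearMap.ext_on hS fun x hx ↦ ?_⟩
  ext i
  have hgx : g i x = r • f x i := LinearMap.congr_fun (hg i) x
  by_cases hi : i ∈ s
  · simp [DFinsupp.single_apply, hi, hgx]
  · have hfx : f x i = 0 := by
      by_contra hne
      exact hi (Finset.mem_biUnion.2 ⟨x, hx, DFinsupp.mem_support_iff.2 hne⟩)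
    simp [DFinsupp.single_apply, hi, hfx]

end ExtensionIdeal

section ExtOne

variable {R : Type u} [CommRing R]

lemma mem_annihilator_shortComplex_homology (S : ShortComplex (ModuleCat.{u} R)) {r : R} :
    r ∈ Module.annihilator R S.homology ↔
      ∀ y : S.X₂, S.g.hom y = 0 → ∃ z : S.X₁, S.f.hom z = r • y := by
  rw [S.moduleCatHomologyIso.toLinearEquiv.annihilator_eq]
  change r ∈ Module.annihilator R (LinearMap.ker S.g.hom ⧸ LinearMap.range S.moduleCatToCycles) ↔ _
  simp only [Submodule.annihilator_quotient, Submodule.mem_colon, Set.mem_univ, true_imp_iff,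
    LinearMap.mem_range, Subtype.forall, Subtype.ext_iff]
  rfl

variable (M A : Type u) [AddCommGroup M] [Module R M] [AddCommGroup A] [Module R A]

lemma annihilator_extMod_one_of_projectiveResolution
    (Q : ProjectiveResolution (ModuleCat.of R M)) :
    Module.annihilator R (extMod R M A 1) =
      extensionIdeal (LinearMap.range (Q.complex.d 1 0).hom) A := by
  let K := Q.complex.linearYonedaObj R (ModuleCat.of R A)
  let extIso : extMod R M A 1 ≅ (K.sc' 0 1 2).homology :=
    Q.isoExt 1 (ModuleCat.of R A) ≪≫
      ShortComplex.homologyMapIso (K.isoSc' 0 1 2 (by simp) (by simp))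
  have hexact : Function.Exact (Q.complex.d 2 1).hom (Q.complex.d 1 0).hom :=
    LinearMap.exact_iff.2 (Q.exact_succ 0).moduleCat_range_eq_ker.symm
  ext r
  rw [extIso.toLinearEquiv.annihilator_eq, mem_annihilator_shortComplex_homology,
    mem_extensionIdeal_range hexact]
  constructor
  · intro h y hy
    obtain ⟨z, hz⟩ := h (ModuleCat.ofHom y) (ModuleCat.hom_ext hy)
    exact ⟨z.hom, congrArg ModuleCat.Hom.hom hz⟩
  · intro h y hy
    obtain ⟨z, hz⟩ := h y.hom (congrArg ModuleCat.Hom.hom hy)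
    exact ⟨ModuleCat.ofHom z, ModuleCat.hom_ext hz⟩

theorem annihilator_extMod_one {P : Type u} [AddCommGroup P] [Module R P] [Module.Projective R P]
    {p : P →ₗ[R] M} (hp : Function.Surjective p) :
    Module.annihilator R (extMod R M A 1) = extensionIdeal (LinearMap.ker p) A := by
  let Q := projectiveResolution (ModuleCat.of R M)
  have : Module.Projective R (Q.complex.X 0) :=
    (IsProjective.iff_projective _).2 (Q.projective 0)
  have hrange : LinearMap.range (Q.complex.d 1 0).hom = LinearMap.ker (Q.π.f 0).hom :=
    Q.exact₀.moduleCat_range_eq_ker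
  have hπ : Function.Surjective (Q.π.f 0).hom := (ModuleCat.epi_iff_surjective _).1 inferInstance
  rw [annihilator_extMod_one_of_projectiveResolution M A Q, hrange]
  exact extensionIdeal_ker_eq hπ hp

lemma subsingleton_extMod_one_iff {P : Type u} [AddCommGroup P] [Module R P]
    [Module.Projective R P] {p : P →ₗ[R] M} (hp : Function.Surjective p) :
    Subsingleton (extMod R M A 1) ↔
      ∀ f : LinearMap.ker p →ₗ[R] A, ∃ g : P →ₗ[R] A, g ∘ₗ (LinearMap.ker p).subtype = f := by
  rw [← Module.annihilator_eq_top_iff (R := R), annihilator_extMod_one M A hp,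
    extensionIdeal_eq_top_iff]

lemma annihilator_le_annihilator_extMod_one :
    Module.annihilator R A ≤ Module.annihilator R (extMod R M A 1) := by
  rw [annihilator_extMod_one M A (Finsupp.linearCombination_id_surjective R M)]
  exact annihilator_le_extensionIdeal _

lemma subsingleton_extMod_one_of_injective [Module.Injective R A] :
    Subsingleton (extMod R M A 1) :=
  (subsingleton_extMod_one_iff M A (Finsupp.linearCombination_id_surjective R M)).2 fun f ↦
    Module.Injective.extension_property R A _ _ _ (Submodule.injective_subtype _) f

variable {A} in
lemma injective_of_subsingleton_extMod_one
    (h : ∀ I : Ideal R, Subsingleton (extMod R (R ⧸ I) A 1)) : Module.Injective R A := by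
  refine Module.Baer.injective fun I f ↦ ?_
  have hext := (subsingleton_extMod_one_iff (R ⧸ I) A I.mkQ_surjective).1 (h I)
  rw [Submodule.ker_mkQ] at hext
  obtain ⟨g, hg⟩ := hext f
  exact ⟨g, fun x hx ↦ LinearMap.congr_fun hg ⟨x, hx⟩⟩

end ExtOne

section FPInjective

variable (R : Type u) [CommRing R]

/-- `A` is FP-injective (also called absolutely pure) if `Ext^1_R(N, A) = 0` for every finitely
presented module `N`. It is the classical notion of which absolute `w`-purity is the
`GV`-torsion analogue. -/
def IsFPInjective (A : Type u) [AddCommGroup A] [Module R A] : Prop :=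
  ∀ (N : Type u) [AddCommGroup N] [Module R N], Module.FinitePresentation R N →
    Subsingleton (extMod R N A 1)

variable {R}

lemma isFPInjective_of_injective (A : Type u) [AddCommGroup A] [Module R A]
    [Module.Injective R A] : IsFPInjective R A :=
  fun N _ _ _ ↦ subsingleton_extMod_one_of_injective N A

lemma IsFPInjective.injective [IsNoetherianRing R] {A : Type u} [AddCommGroup A] [Module R A]
    (hA : IsFPInjective R A) : Module.Injective R A :=
  injective_of_subsingleton_extMod_one fun I ↦
    hA (R ⧸ I) (Module.finitePresentation_of_finite R _)

lemma IsFPInjective.dfinsupp {ι : Type} {E : ι → Type u} [∀ i, AddCommGroup (E i)]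
    [∀ i, Module R (E i)] (hE : ∀ i, IsFPInjective R (E i)) : IsFPInjective R (Π₀ i, E i) := by
  intro N _ _ hN
  obtain ⟨n, p, hp⟩ := Module.Finite.exists_fin' R N
  rw [← Module.annihilator_eq_top_iff (R := R), annihilator_extMod_one _ _ hp, eq_top_iff]
  refine le_trans (le_iInf fun i ↦ ?_)
    (iInf_extensionIdeal_le_dfinsupp (Module.FinitePresentation.fg_ker p hp))
  rw [← annihilator_extMod_one _ _ hp, Module.annihilator_eq_top_iff.2 (hE i N hN)]

end FPInjective

section BassPapp

lemma exists_dfinsupp_lift {R M ι : Type*} {E : ι → Type*} [Semiring R] [AddCommMonoid M]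
    [Module R M] [∀ i, AddCommMonoid (E i)] [∀ i, Module R (E i)] (F : M →ₗ[R] ∀ i, E i)
    (hF : ∀ x, {i | F x i ≠ 0}.Finite) :
    ∃ G : M →ₗ[R] Π₀ i, E i, ∀ x i, G x i = F x i := by
  choose G hG using fun x ↦ show ∃ d : Π₀ i, E i, ⇑d = F x from
    ⟨⟨F x, Trunc.mk ⟨(hF x).toFinset.val, fun i ↦ by simp [em']⟩⟩, rfl⟩
  refine ⟨⟨⟨G, fun x y ↦ ?_⟩, fun r x ↦ ?_⟩, fun x ↦ congrFun (hG x)⟩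
  · exact DFunLike.coe_injective (by rw [DFinsupp.coe_add, hG, hG, hG, map_add])
  · exact DFunLike.coe_injective (by simp [hG])

variable {R : Type u} [Ring R]

lemma exists_injective_embedding (M : Type u) [AddCommGroup M] [Module R M] :
    ∃ (E : Type u) (_ : AddCommGroup E) (_ : Module R E) (i : M →ₗ[R] E),
      Module.Injective R E ∧ Function.Injective i := by
  obtain ⟨⟨E, hE, i, hi⟩⟩ := EnoughInjectives.presentation (ModuleCat.of R M)
  exact ⟨E, inferInstance, inferInstance, i.hom,
    (Module.injective_iff_injective_object R E).2 hE, (ModuleCat.mono_iff_injective i).1 hi⟩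

theorem isNoetherianRing_of_injective_dfinsupp
    (H : ∀ (E : ℕ → Type u) [∀ n, AddCommGroup (E n)] [∀ n, Module R (E n)],
      (∀ n, Module.Injective R (E n)) → Module.Injective R (Π₀ n, E n)) :
    IsNoetherianRing R := by
  refine monotone_stabilizes_iff_noetherian.1 fun I ↦ ?_
  choose E _ _ i hE hi using fun n ↦ exists_injective_embedding (R := R) (R ⧸ I n)
  have hzero (x : R) (n : ℕ) : i n ((I n).mkQ x) = 0 ↔ x ∈ I n := by
    rw [map_eq_zero_iff _ (hi n), Submodule.mkQ_apply, Submodule.Quotient.mk_eq_zero]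
  let U : Ideal R := ⨆ n, I n
  obtain ⟨φ, hφ⟩ : ∃ φ : U →ₗ[R] Π₀ n, E n, ∀ x n, φ x n = i n ((I n).mkQ x) := by
    refine exists_dfinsupp_lift (LinearMap.pi fun n ↦ i n ∘ₗ (I n).mkQ ∘ₗ U.subtype) fun x ↦ ?_
    obtain ⟨k, hk⟩ := (Submodule.mem_iSup_of_directed I I.monotone.directed_le).1 x.2
    refine (Set.finite_lt_nat k).subset fun n hn ↦ ?_
    by_contra! hkn
    exact hn ((hzero x n).2 (I.monotone (not_lt.1 hkn) hk))
  have := H E hE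
  obtain ⟨g, hg⟩ :=
    Module.Injective.extension_property R (Π₀ n, E n) _ _ U.subtype U.injective_subtype φ
  -- The `N`-th coordinate of `g` vanishes at `1`, hence everywhere, which forces `U ≤ I N`.
  classical
  obtain ⟨N, hN⟩ := Infinite.exists_notMem_finset (g 1).support
  have hUN : U ≤ I N := fun x hx ↦ by
    have hgx : g x = φ ⟨x, hx⟩ := LinearMap.congr_fun hg ⟨x, hx⟩
    rw [← hzero, ← hφ ⟨x, hx⟩, ← hgx, ← mul_one x, ← smul_eq_mul, map_smul, DFinsupp.smul_apply,
      DFinsupp.notMem_support_iff.1 hN, smul_zero]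
  exact ⟨N, fun m hm ↦ (I.monotone hm).antisymm ((le_iSup I m).trans hUN)⟩

end BassPapp

section GVIdeal

variable {R : Type u} [CommRing R]

lemma IsGVIdeal.top : IsGVIdeal R ⊤ := by
  refine ⟨Module.Finite.fg_top, fun a b hab ↦ ?_, fun f ↦ ⟨f ⟨1, trivial⟩, ?_⟩⟩
  · simpa using LinearMap.congr_fun hab ⟨1, trivial⟩
  · ext x
    have hx : x = (x : R) • (⟨1, trivial⟩ : (⊤ : Ideal R)) := Subtype.ext (by simp)
    conv_rhs => rw [hx, map_smul]
    simp [mul_comm]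

lemma IsGVIdeal.eq_top_of_isIdempotentElem {J : Ideal R} (hJ : IsGVIdeal R J)
    (hidem : IsIdempotentElem J) : J = ⊤ := by
  obtain ⟨r, hr, hrJ⟩ := Submodule.exists_sub_one_mem_and_smul_eq_zero_of_fg_of_le_smul J J hJ.1
    hidem.eq.ge
  have hr0 : r = 0 := hJ.2.1 (LinearMap.ext fun x ↦ by simpa using hrJ x x.2)
  rw [Ideal.eq_top_iff_one]
  simpa [hr0] using hr

lemma isDWRing_iff : IsDWRing R ↔ ∀ J : Ideal R, IsGVIdeal R J → J = ⊤ := by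
  refine ⟨fun h J hJ ↦ ?_, fun h m _ x J hJ hx ↦ ?_⟩
  · by_contra hne
    obtain ⟨m, hm, hJm⟩ := J.exists_le_maximal hne
    have h1m : (1 : R) ∈ m := h m hm 1 J hJ fun j hj ↦ (mul_one j).symm ▸ hJm hj
    exact hm.ne_top ((Ideal.eq_top_iff_one m).2 h1m)
  · simpa using hx 1 (h J hJ ▸ Submodule.mem_top)

lemma IsGVTorsion.subsingleton (hR : IsDWRing R) {M : Type u} [AddCommGroup M] [Module R M]
    (hM : IsGVTorsion R M) : Subsingleton M := by
  refine subsingleton_of_forall_eq 0 fun x ↦ ?_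
  obtain ⟨J, hJ, hJx⟩ := hM x
  simpa using hJx 1 (isDWRing_iff.1 hR J hJ ▸ Submodule.mem_top)

end GVIdeal

section AbsolutelyWPure

variable {R : Type u} [CommRing R]

lemma IsFPInjective.isAbsolutelyWPure {A : Type u} [AddCommGroup A] [Module R A]
    (hA : IsFPInjective R A) : IsAbsolutelyWPure R A := fun N _ _ hN _ ↦
  have := hA N hN
  ⟨⊤, IsGVIdeal.top, fun _ _ ↦ Subsingleton.elim _ _⟩

lemma IsAbsolutelyWPure.isFPInjective (hR : IsDWRing R) {A : Type u} [AddCommGroup A]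
    [Module R A] (hA : IsAbsolutelyWPure R A) : IsFPInjective R A :=
  fun N _ _ hN ↦ (hA N hN).subsingleton hR

lemma IsGVIdeal.isAbsolutelyWPure {J : Ideal R} (hJ : IsGVIdeal R J) {A : Type u}
    [AddCommGroup A] [Module R A] (hJA : J ≤ Module.annihilator R A) : IsAbsolutelyWPure R A :=
  fun N _ _ _ x ↦ ⟨J, hJ, fun _ hj ↦
    Module.mem_annihilator.1 (annihilator_le_annihilator_extMod_one N A (hJA hj)) x⟩

lemma eq_zero_of_le_annihilator_of_injective {J : Ideal R} {A : Type u} [AddCommGroup A]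
    [Module R A] [Module.Injective R A] (hJA : J ≤ Module.annihilator R A) (f : J →ₗ[R] A) :
    f = 0 := by
  obtain ⟨g, rfl⟩ := Module.Injective.extension_property R A _ _ J.subtype J.injective_subtype f
  ext x
  calc g x = (x : R) • g 1 := by rw [← map_smul, smul_eq_mul, mul_one]
    _ = 0 := Module.mem_annihilator.1 (hJA x.2) _

lemma le_annihilator_cotangent (J : Ideal R) : J ≤ Module.annihilator R J.Cotangent :=
  fun _ hj ↦ Module.mem_annihilator.2 (Ideal.Cotangent.smul_eq_zero_of_mem hj)

lemma isIdempotentElem_of_injective_cotangent (J : Ideal R) [Module.Injective R J.Cotangent] :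
    IsIdempotentElem J := by
  have hzero : J.toCotangent = 0 :=
    eq_zero_of_le_annihilator_of_injective (le_annihilator_cotangent J) _
  rw [← J.cotangent_subsingleton_iff]
  refine subsingleton_of_forall_eq 0 fun y ↦ ?_
  obtain ⟨x, rfl⟩ := J.toCotangent_surjective y
  rw [hzero, LinearMap.zero_apply]

theorem isDWRing_of_isAbsolutelyWPure_injective
    (H : ∀ (A : Type u) [AddCommGroup A] [Module R A], IsAbsolutelyWPure R A →
      Module.Injective R A) : IsDWRing R := by
  refine isDWRing_iff.2 fun J hJ ↦ ?_
  have : Module.Injective R J.Cotangent := H _ (hJ.isAbsolutelyWPure (le_annihilator_cotangent J))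
  exact hJ.eq_top_of_isIdempotentElem (isIdempotentElem_of_injective_cotangent J)

theorem isNoetherianRing_of_isFPInjective_injective
    (H : ∀ (A : Type u) [AddCommGroup A] [Module R A], IsFPInjective R A →
      Module.Injective R A) : IsNoetherianRing R :=
  isNoetherianRing_of_injective_dfinsupp fun E _ _ _ ↦
    H _ (IsFPInjective.dfinsupp fun n ↦ isFPInjective_of_injective (E n))

theorem forall_isWFPProjective_iff :
    (∀ (M : Type u) [AddCommGroup M] [Module R M], IsWFPProjective R M) ↔
      ∀ (A : Type u) [AddCommGroup A] [Module R A], IsAbsolutelyWPure R A →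
        Module.Injective R A := by
  refine ⟨fun h A _ _ hA ↦ injective_of_subsingleton_extMod_one fun I ↦ h (R ⧸ I) A hA,
    fun h M _ _ A _ _ hA ↦ ?_⟩
  have := h A hA
  exact subsingleton_extMod_one_of_injective M A

end AbsolutelyWPure

/-- `R` is a Noetherian DW-ring iff every module is `w`-FP-projective, iff every
absolutely `w`-pure module is injective. -/
theorem noetherianDW_characterization (R : Type u) [CommRing R] :
    ((∀ (M : Type u) [AddCommGroup M] [Module R M], IsWFPProjective R M) ↔
      (IsNoetherianRing R ∧ IsDWRing R)) ∧
    ((∀ (A : Type u) [AddCommGroup A] [Module R A], IsAbsolutelyWPure R A →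
        Module.Injective R A) ↔
      (IsNoetherianRing R ∧ IsDWRing R)) := by
  have injective_iff : (∀ (A : Type u) [AddCommGroup A] [Module R A], IsAbsolutelyWPure R A →
      Module.Injective R A) ↔ (IsNoetherianRing R ∧ IsDWRing R) := by
    constructor
    · intro h
      exact ⟨isNoetherianRing_of_isFPInjective_injective fun A _ _ hA ↦ h A hA.isAbsolutelyWPure,
        isDWRing_of_isAbsolutelyWPure_injective h⟩
    · rintro ⟨_, hDW⟩ A _ _ hA
      exact (hA.isFPInjective hDW).injective
  exact ⟨forall_isWFPProjective_iff.trans injective_iff, injective_iff⟩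
end
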